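/- arXiv:2307.06105 — 3 statements merged into one kernel-verified Lean document; each statement's English description precedes it below -/
import Mathlib

section
/- Let V : ℝ^n → ℝ be a C² potential and let x : ℝ → ℝ^n be a C² curve satisfying Newton's equation x''(t) = −∇V(x(t)) for all t ∈ ℝ. If x has two distinct brake instants t₁ < t₂ (i.e. x'(t₁) = x'(t₂) = 0), then x is 2(t₂ − t₁)-periodic: x(t + 2(t₂ − t₁)) = x(t) for all t ∈ ℝ. -/
/-!
Newton's equation is invariant under time reversal, so reflecting a solution about a brake instant
`a` gives a solution `t ↦ x (2a - t)` with the same position and velocity at `a`. The phase-space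
vector field `(q, p) ↦ (p, -∇V q)` is `C¹`, so initial value problems have unique global solutions
(`eq_of_hasDerivAt_of_contDiff`) and the reflected solution is `x` itself (`brake_reflection`).
The composition of the reflections about `t₁` and `t₂` is the translation by `2(t₂ - t₁)`.
-/

open Filter Topology in
/-- Global uniqueness for an autonomous ODE with `C¹` right-hand side: the set where two solutions
agree is closed by continuity and open by local Lipschitz uniqueness. -/
theorem eq_of_hasDerivAt_of_contDiff {E : Type*} [NormedAddCommGroup E] [NormedSpace ℝ E]
    {F : E → E} (hF : ContDiff ℝ 1 F) {f g : ℝ → E}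
    (hf : ∀ t, HasDerivAt f (F (f t)) t) (hg : ∀ t, HasDerivAt g (F (g t)) t)
    {t₀ : ℝ} (h₀ : f t₀ = g t₀) : f = g := by
  have hfc : Continuous f := continuous_iff_continuousAt.2 fun t => (hf t).continuousAt
  have hgc : Continuous g := continuous_iff_continuousAt.2 fun t => (hg t).continuousAt
  have hopen : IsOpen {t | f t = g t} := by
    rw [isOpen_iff_mem_nhds]
    intro t ht
    have ht' : f t = g t := ht
    obtain ⟨K, s, hs, hK⟩ := hF.contDiffAt.exists_lipschitzOnWith (x := f t)
    exact ODE_solution_unique_of_eventually (v := fun _ => F) (s := fun _ => s)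
      (Eventually.of_forall fun _ => hK)
      ((hfc.continuousAt.eventually_mem hs).mono fun u hu => ⟨hf u, hu⟩)
      ((hgc.continuousAt.eventually_mem (ht' ▸ hs)).mono fun u hu => ⟨hg u, hu⟩) ht'
  have huniv : {t | f t = g t} = Set.univ :=
    IsClopen.eq_univ ⟨isClosed_eq hfc hgc, hopen⟩ ⟨t₀, h₀⟩
  funext t
  exact Set.eq_univ_iff_forall.1 huniv t

/-- A solution of Newton's equation is symmetric in time about each of its brake instants. -/
theorem brake_reflection {H : Type*} [NormedAddCommGroup H] [InnerProductSpace ℝ H]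
    [CompleteSpace H] {V : H → ℝ} (hV : ContDiff ℝ 2 V) {x : ℝ → H} (hx : ContDiff ℝ 2 x)
    (hNewton : ∀ t : ℝ, deriv (deriv x) t = -gradient V (x t))
    {a : ℝ} (ha : deriv x a = 0) (t : ℝ) : x (2 * a - t) = x t := by
  have hgrad : ContDiff ℝ 1 (gradient V) :=
    (InnerProductSpace.toDual ℝ H).symm.contDiff.comp (hV.fderiv_right (m := 1) (by norm_num))
  have hF : ContDiff ℝ 1 fun p : H × H => (p.2, -gradient V p.1) :=
    contDiff_snd.prodMk (hgrad.comp contDiff_fst).neg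
  have hx₁ : ∀ t, HasDerivAt x (deriv x t) t := fun t =>
    (hx.differentiable (by norm_num) t).hasDerivAt
  have hx₂ : ∀ t, HasDerivAt (deriv x) (-gradient V (x t)) t := fun t =>
    hNewton t ▸ (hx.differentiable_deriv_two t).hasDerivAt
  have hrefl := eq_of_hasDerivAt_of_contDiff hF
    (f := fun t => (x (2 * a - t), -deriv x (2 * a - t))) (g := fun t => (x t, deriv x t))
    (fun t => by
      have h₁ := (hx₁ (2 * a - t)).comp_const_sub (2 * a) t
      have h₂ := ((hx₂ (2 * a - t)).comp_const_sub (2 * a) t).neg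
      simp only [neg_neg] at h₂
      exact h₁.prodMk h₂)
    (fun t => (hx₁ t).prodMk (hx₂ t)) (t₀ := a)
    (by simp [two_mul, ha])
  exact congrArg Prod.fst (congrFun hrefl t)

/-- Let `V : ℝⁿ → ℝ` be a `C²` potential and `x : ℝ → ℝⁿ` a `C²` curve
satisfying Newton's equation `x'' = -∇V(x)`. If `x` has two distinct brake instants
`t₁ < t₂` (`x'(t₁) = x'(t₂) = 0`), then `x` is `2(t₂ - t₁)`-periodic. -/
theorem brake_orbit_periodic (n : ℕ)
    (V : EuclideanSpace ℝ (Fin n) → ℝ) (hV : ContDiff ℝ 2 V)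
    (x : ℝ → EuclideanSpace ℝ (Fin n)) (hx : ContDiff ℝ 2 x)
    (hNewton : ∀ t : ℝ, deriv (deriv x) t = -gradient V (x t))
    (t₁ t₂ : ℝ) (hlt : t₁ < t₂)
    (hbrake₁ : deriv x t₁ = 0) (hbrake₂ : deriv x t₂ = 0) :
    ∀ t : ℝ, x (t + 2 * (t₂ - t₁)) = x t := by
  intro t
  have h₁ := brake_reflection hV hx hNewton hbrake₁ t
  have h₂ := brake_reflection hV hx hNewton hbrake₂ (2 * t₁ - t)
  rw [← h₁, ← h₂]
  congr 1
  ring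
end

section
/- Let V : ℝ^n → ℝ be a C² potential and let x : ℝ → ℝ^n be a C² curve satisfying Newton's equation x''(t) = −∇V(x(t)) for all t ∈ ℝ. Suppose t₁ < t₂ are brake instants of x (x'(t₁) = x'(t₂) = 0) and there is no brake instant in the open interval (t₁, t₂). Then the set of all brake instants of x is exactly the arithmetic progression { t₁ + k(t₂ − t₁) : k ∈ ℤ }. In particular, a T-periodic brake orbit has exactly two brake instants in each period interval of length T, and they differ by T/2. -/
/-!
Newton's equation is invariant under `t ↦ 2b - t`, so at a brake instant `b` the reflected curve
`t ↦ x (2b - t)` solves the same initial value problem as `x` and hence equals `x`; differentiating,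
`x' (2b - t) = -x' t`. Composing the reflections about `t₁` and `t₂` shows that `x'` is periodic
with period `2 (t₂ - t₁)`. Its zeros are therefore determined by those in
`[t₁, t₁ + 2 (t₂ - t₁))`, and the reflection about `t₂` carries the part of this period
beyond `t₂` into `(t₁, t₂)`, where there are none.
-/

/-- Two global integral curves of a `C¹` vector field that agree at one time are equal: on each
bounded time interval both stay in a compact set, where the field is Lipschitz. -/
theorem integralCurve_unique {E : Type*} [NormedAddCommGroup E] [NormedSpace ℝ E]
    {v : E → E} (hv : ContDiff ℝ 1 v) {f g : ℝ → E} {t₀ : ℝ}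
    (hf : ∀ t, HasDerivAt f (v (f t)) t) (hg : ∀ t, HasDerivAt g (v (g t)) t)
    (h : f t₀ = g t₀) : f = g := by
  ext t
  obtain ⟨a, ha⟩ := exists_lt (min t t₀)
  obtain ⟨b, hb⟩ := exists_gt (max t t₀)
  rw [lt_min_iff] at ha
  rw [max_lt_iff] at hb
  have hfc : Continuous f := continuous_iff_continuousAt.2 fun t => (hf t).continuousAt
  have hgc : Continuous g := continuous_iff_continuousAt.2 fun t => (hg t).continuousAt
  have hs : IsCompact (f '' Set.Icc a b ∪ g '' Set.Icc a b) :=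
    (isCompact_Icc.image hfc).union (isCompact_Icc.image hgc)
  obtain ⟨K, hK⟩ := hv.locallyLipschitz.locallyLipschitzOn.exists_lipschitzOnWith_of_compact hs
  exact ODE_solution_unique_of_mem_Ioo (v := fun _ => v) (fun _ _ => hK) ⟨ha.2, hb.2⟩
    (fun s hs => ⟨hf s, Or.inl ⟨s, Set.Ioo_subset_Icc_self hs, rfl⟩⟩)
    (fun s hs => ⟨hg s, Or.inr ⟨s, Set.Ioo_subset_Icc_self hs, rfl⟩⟩) h ⟨ha.1, hb.1⟩

theorem contDiff_gradient {n : ℕ} {V : EuclideanSpace ℝ (Fin n) → ℝ} (hV : ContDiff ℝ 2 V) :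
    ContDiff ℝ 1 (gradient V) :=
  (InnerProductSpace.toDual ℝ (EuclideanSpace ℝ (Fin n))).symm.contDiff.comp
    (hV.fderiv_right (m := 1) (by norm_num))

/-- The velocity is odd about every brake instant. -/
theorem deriv_reflect_of_brake {n : ℕ} {V : EuclideanSpace ℝ (Fin n) → ℝ} (hV : ContDiff ℝ 2 V)
    {x : ℝ → EuclideanSpace ℝ (Fin n)} (hx : ContDiff ℝ 2 x)
    (hNewton : ∀ t : ℝ, deriv (deriv x) t = -gradient V (x t))
    {b : ℝ} (hb : deriv x b = 0) (t : ℝ) : deriv x (2 * b - t) = -deriv x t := by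
  have hd (t : ℝ) : HasDerivAt x (deriv x t) t :=
    (hx.differentiable (by norm_num) t).hasDerivAt
  have hd' (t : ℝ) : HasDerivAt (deriv x) (-gradient V (x t)) t := by
    rw [← hNewton]
    have h : ContDiff ℝ 1 (deriv x) :=
      (contDiff_succ_iff_deriv.1 (hx.of_le (m := 1 + 1) (by norm_num [one_add_one_eq_two]))).2.2
    exact (h.differentiable (by norm_num) t).hasDerivAt
  have hv : ContDiff ℝ 1 fun p : EuclideanSpace ℝ (Fin n) × EuclideanSpace ℝ (Fin n) =>
      (p.2, -gradient V p.1) :=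
    contDiff_snd.prodMk ((contDiff_gradient hV).comp contDiff_fst).neg
  have key := integralCurve_unique hv (f := fun t => (x (2 * b - t), -deriv x (2 * b - t)))
    (g := fun t => (x t, deriv x t)) (t₀ := b)
    (fun t => ((hd (2 * b - t)).comp_const_sub (2 * b) t).prodMk <| by
      simpa using ((hd' (2 * b - t)).comp_const_sub (2 * b) t).fun_neg)
    (fun t => (hd t).prodMk (hd' t))
    (by simp [show 2 * b - b = b by ring, hb])
  exact neg_eq_iff_eq_neg.1 (congrArg Prod.snd (congrFun key t))

/-- Let `V : ℝⁿ → ℝ` be a `C²` potential and `x : ℝ → ℝⁿ` a `C²` curve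
satisfying Newton's equation `x'' = -∇V(x)`. If `t₁ < t₂` are brake instants of `x` and
there is no brake instant in the open interval `(t₁, t₂)`, then the set of all brake
instants of `x` is exactly the arithmetic progression `{ t₁ + k (t₂ - t₁) : k ∈ ℤ }`. -/
theorem brake_instants_arithmetic_progression (n : ℕ)
    (V : EuclideanSpace ℝ (Fin n) → ℝ) (hV : ContDiff ℝ 2 V)
    (x : ℝ → EuclideanSpace ℝ (Fin n)) (hx : ContDiff ℝ 2 x)
    (hNewton : ∀ t : ℝ, deriv (deriv x) t = -gradient V (x t))
    (t₁ t₂ : ℝ) (hlt : t₁ < t₂)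
    (hbrake₁ : deriv x t₁ = 0) (hbrake₂ : deriv x t₂ = 0)
    (hnone : ∀ t ∈ Set.Ioo t₁ t₂, deriv x t ≠ 0) :
    {t : ℝ | deriv x t = 0} = {t : ℝ | ∃ k : ℤ, t = t₁ + k * (t₂ - t₁)} := by
  set d := t₂ - t₁ with hd
  have hd0 : 0 < d := sub_pos.2 hlt
  have r₁ := deriv_reflect_of_brake hV hx hNewton hbrake₁
  have r₂ := deriv_reflect_of_brake hV hx hNewton hbrake₂
  have hper : Function.Periodic (deriv x) (2 * d) := fun t => by
    rw [show t + 2 * d = 2 * t₂ - (2 * t₁ - t) by rw [hd]; ring, r₂, r₁, neg_neg]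
  ext t
  simp only [Set.mem_ofPred_eq]
  constructor
  · intro ht
    -- `t - 2 * m * d` lies in the period `[t₁, t₁ + 2 * d)`.
    set m := ⌊(t - t₁) / (2 * d)⌋ with hm
    have h1 : (m : ℝ) * (2 * d) ≤ t - t₁ := (le_div_iff₀ (by positivity)).1 (Int.floor_le _)
    have h2 : t - t₁ < (m + 1) * (2 * d) :=
      (div_lt_iff₀ (by positivity)).1 (Int.lt_floor_add_one _)
    obtain ⟨s, hs⟩ : ∃ s, s = t - m * (2 * d) := ⟨_, rfl⟩
    have hs0 : deriv x s = 0 := by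
      rw [hs, hper.sub_int_mul_eq, ht]
    rcases lt_trichotomy s t₂ with h | h | h
    · have : s = t₁ := by
        by_contra hne
        exact hnone s ⟨lt_of_le_of_ne (by linarith) (Ne.symm hne), h⟩ hs0
      exact ⟨2 * m, by push_cast; linarith⟩
    · exact ⟨2 * m + 1, by push_cast; linarith⟩
    · exact absurd (by rw [r₂, hs0, neg_zero]) (hnone (2 * t₂ - s) ⟨by linarith, by linarith⟩)
  · rintro ⟨k, rfl⟩
    obtain ⟨m, rfl | rfl⟩ := k.even_or_odd'
    · rw [show t₁ + ((2 * m : ℤ) : ℝ) * d = t₁ + m * (2 * d) by push_cast; ring,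
        hper.int_mul m, hbrake₁]
    · rw [show t₁ + ((2 * m + 1 : ℤ) : ℝ) * d = t₂ + m * (2 * d) by push_cast; rw [hd]; ring,
        hper.int_mul m, hbrake₂]
end

section
/- Let m ≥ 1, σ > 0, ε > 0, let f : ℝ^m × ℝ → ℝ be a C² function with f(0,0) = 1, and let H : ℝ^m × ℝ → Sym(m, ℝ) be a C² map into symmetric m × m matrices. Define the Lagrangian L : (ℝ^m × ℝ) × (ℝ^m × ℝ) → ℝ by L((x,y),(v_x,v_y)) = (σ²/2)[ v_y² + f(x,y)( ‖v_x‖² + ⟨H(x,y) v_x, v_x⟩ ) ] + y/2. Then the curve c(t) = ( 0, (1/(4σ²))(t − ε/2)² ) is a solution of the Euler–Lagrange equations of L on [0, ε]: the map t ↦ D_v L(c(t), c'(t)) (the Fréchet derivative of L in the velocity variable, evaluated along the curve) is differentiable in t and its derivative equals D_q L(c(t), c'(t)) (the Fréchet derivative of L in the position variable) for every t ∈ [0, ε]. -/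
/-!
The curve stays on the axis `x = 0` with velocity `(0, b)`, `b = (t - ε/2) / (2σ²)`. The term
`f (‖vₓ‖² + ⟪H vₓ, vₓ⟫)` is quadratic in `vₓ`, so where `vₓ = 0` it contributes neither to `D_v L`
(`hasFDerivAt_quadratic_zero`) nor to `D_q L`. Hence `D_v L = σ² b dy = (t - ε/2)/2 · dy`, whose
time derivative is `dy / 2`, and `D_q L = dy / 2` comes from the potential alone.
-/

open scoped RealInnerProductSpace

/-- The form `w ↦ ‖w.1‖² + ⟪A w.1, w.1⟫` has zero derivative at vectors with zero first
component. -/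
lemma hasFDerivAt_quadratic_zero {E : Type*} [NormedAddCommGroup E] [InnerProductSpace ℝ E]
    (A : E →L[ℝ] E) (b : ℝ) :
    HasFDerivAt (fun w : E × ℝ => ‖w.1‖ ^ 2 + ⟪A w.1, w.1⟫) (0 : E × ℝ →L[ℝ] ℝ) (0, b) := by
  have h1 : HasFDerivAt (fun w : E × ℝ => w.1) (ContinuousLinearMap.fst ℝ E ℝ) (0, b) :=
    hasFDerivAt_fst
  have h2 : HasFDerivAt (fun w : E × ℝ => A w.1) (A.comp (ContinuousLinearMap.fst ℝ E ℝ)) (0, b) :=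
    A.hasFDerivAt.comp _ h1
  refine (h1.norm_sq.add (h2.inner ℝ h1)).congr_fderiv ?_
  ext v <;> simp

/-- For the mechanical Lagrangian
`L((x,y),(vₓ,v_y)) = (σ²/2)[v_y² + f(x,y)(‖vₓ‖² + ⟨H(x,y)vₓ, vₓ⟩)] + y/2` coming from
the Seifert-coordinate metric (`f` of class `C²` with `f(0,0) = 1`, `H` a `C²` field of
symmetric operators), the curve `c(t) = (0, (1/(4σ²))(t - ε/2)²)` solves the
Euler–Lagrange equations on `[0, ε]`: the velocity-partial-derivative of `L` along the
curve is differentiable in `t` with derivative the position-partial-derivative of `L`. -/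
theorem seifert_brake_curve_solves_euler_lagrange (m : ℕ) (hm : 1 ≤ m)
    (σ ε : ℝ) (hσ : 0 < σ) (hε : 0 < ε)
    (f : EuclideanSpace ℝ (Fin m) × ℝ → ℝ) (hf : ContDiff ℝ 2 f) (hf0 : f (0, 0) = 1)
    (H : EuclideanSpace ℝ (Fin m) × ℝ →
      (EuclideanSpace ℝ (Fin m) →L[ℝ] EuclideanSpace ℝ (Fin m)))
    (hH : ContDiff ℝ 2 H)
    (hHsymm : ∀ p u v, ⟪H p u, v⟫ = ⟪u, H p v⟫)
    (L : (EuclideanSpace ℝ (Fin m) × ℝ) × (EuclideanSpace ℝ (Fin m) × ℝ) → ℝ)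
    (hL : ∀ q v : EuclideanSpace ℝ (Fin m) × ℝ,
      L (q, v) = σ ^ 2 / 2 * (v.2 ^ 2 + f q * (‖v.1‖ ^ 2 + ⟪H q v.1, v.1⟫)) + q.2 / 2)
    (c : ℝ → EuclideanSpace ℝ (Fin m) × ℝ)
    (hc : ∀ t : ℝ, c t = (0, 1 / (4 * σ ^ 2) * (t - ε / 2) ^ 2)) :
    ∀ t ∈ Set.Icc (0 : ℝ) ε,
      HasDerivAt (fun s : ℝ => fderiv ℝ (fun w => L (c s, w)) (deriv c s))
        (fderiv ℝ (fun q => L (q, deriv c t)) (c t)) t := by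
  intro t _
  have hσ' : σ ≠ 0 := hσ.ne'
  have hcd : ∀ s, deriv c s = (0, 1 / (2 * σ ^ 2) * (s - ε / 2)) := by
    intro s
    rw [funext hc]
    have h : HasDerivAt (fun s : ℝ => 1 / (4 * σ ^ 2) * (s - ε / 2) ^ 2)
        (1 / (2 * σ ^ 2) * (s - ε / 2)) s := by
      refine ((((hasDerivAt_id s).sub_const (ε / 2)).pow 2).const_mul
        (1 / (4 * σ ^ 2))).congr_deriv ?_
      simp only [id]
      field_simp
      ring
    exact ((hasDerivAt_const s (0 : EuclideanSpace ℝ (Fin m))).prodMk h).deriv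
  have hsnd : ∀ p : EuclideanSpace ℝ (Fin m) × ℝ,
      HasFDerivAt (fun q : EuclideanSpace ℝ (Fin m) × ℝ => q.2)
        (ContinuousLinearMap.snd ℝ (EuclideanSpace ℝ (Fin m)) ℝ) p := fun _ => hasFDerivAt_snd
  have hv : ∀ s, fderiv ℝ (fun w => L (c s, w)) (deriv c s) =
      (1 / 2 * (s - ε / 2)) • ContinuousLinearMap.snd ℝ (EuclideanSpace ℝ (Fin m)) ℝ := by
    intro s
    rw [hcd s]
    simp only [hL]
    refine HasFDerivAt.fderiv ?_
    refine (((((hsnd _).pow 2).add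
      ((hasFDerivAt_quadratic_zero (H (c s)) _).const_mul (f (c s)))).const_mul
        (σ ^ 2 / 2)).add_const ((c s).2 / 2)).congr_fderiv ?_
    ext v
    · simp
    · simp
      field_simp
  have hq : fderiv ℝ (fun q => L (q, deriv c t)) (c t) =
      (1 / 2 : ℝ) • ContinuousLinearMap.snd ℝ (EuclideanSpace ℝ (Fin m)) ℝ := by
    rw [hcd t]
    refine HasFDerivAt.fderiv ?_
    have h := ((hsnd (c t)).const_mul (1 / 2)).const_add
      (σ ^ 2 / 2 * (1 / (2 * σ ^ 2) * (t - ε / 2)) ^ 2)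
    refine h.congr_of_eventuallyEq (Filter.Eventually.of_forall fun q => ?_)
    simp only [hL, map_zero, norm_zero, inner_zero_left]
    ring
  rw [funext hv, hq]
  have h : HasDerivAt (fun s : ℝ => 1 / 2 * (s - ε / 2)) (1 / 2) t := by
    exact (((hasDerivAt_id t).sub_const (ε / 2)).const_mul (1 / 2 : ℝ)).congr_deriv (mul_one _)
  exact h.smul_const (ContinuousLinearMap.snd ℝ (EuclideanSpace ℝ (Fin m)) ℝ)
end
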